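/- arXiv:1609.06385 — 2 statements merged into one kernel-verified Lean document; each statement's English description precedes it below -/
import Mathlib

section
/- Let L₂(u,y) = ψ(u_y) + F(φ(u₁) + φ(u₂)) be a binary background-discrimination loss on a score set S₂ ⊆ ℝ² satisfying the swapping assumption, with adjustment l₂(u) = F(φ(u₁)+φ(u₂)) and pseudo-risk R'₂, where L₂ is convex, ψ is non-increasing, and L₂ is lower-bounded in risk. If Condition ZhangInf holds, then Condition 3 with ζ = δ_binary holds: for all ε ∈ (0,1] and all p₁,p₂ with 0 ≤ p₂ ≤ p₁ − ε and p₁ + p₂ ≤ 1, inf_{u ∈ S₂} R'₂(u, (p̄,p̄)) − inf_{v ∈ S₂} R'₂(v, (p₁,p₂)) ≥ δ_binary(p₁ − p₂), where p̄ = (p₁+p₂)/2. -/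
/-!
Write `Ψ(u) = ψ(u₀) + ψ(u₁)`. The pseudo-risk is `R'(u, q) = F(φ(u₀) + φ(u₁)) + q₀ ψ(u₀) + q₁ ψ(u₁)`.
With `c = (1 - p₁ - p₂) / 2 ≥ 0`, the distribution `p^{p₁ - p₂}` is `(p₁ + c, p₂ + c)` and `p^0` is
`(p̄ + c, p̄ + c)`, hence
`R'(u, p^0) - R'(v, p^{p₁-p₂}) = R'(u, (p̄, p̄)) - R'(v, (p₁, p₂)) + c (Ψ(u) - Ψ(v))`.
On the constraint set `Ψ(u) ≤ Ψ(v)` of Condition ZhangInf the last term is nonpositive, so passing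
from `(p₁, p₂)` to the normalised `p^{p₁-p₂}` can only lower the constrained sup-inf; dropping the
constraint lowers it further, to `δ_binary(p₁ - p₂)`.

The two comparisons of a sup-inf with a difference of infima are `esupE_einf_sub_le` and
`einf_sub_einf_le`; they hold for all infima in `EReal`, where `⊥ - x = ⊥` and `⊤ - ⊤ = ⊥`.
-/

open scoped BigOperators

noncomputable section

namespace Calib

/-- Infimum in the extended reals of a real-valued function over a set
(empty set ↦ `+∞`). -/
def einf {α : Type*} (A : Set α) (f : α → ℝ) : EReal :=
  sInf ((fun a => (f a : EReal)) '' A)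

/-- Infimum in the extended reals of an `EReal`-valued function over a set. -/
def einfE {α : Type*} (A : Set α) (f : α → EReal) : EReal :=
  sInf (f '' A)

/-- Supremum in the extended reals of a real-valued function over a set. -/
def esup {α : Type*} (A : Set α) (f : α → ℝ) : EReal :=
  sSup ((fun a => (f a : EReal)) '' A)

/-- Supremum in the extended reals of an `EReal`-valued function over a set. -/
def esupE {α : Type*} (A : Set α) (f : α → EReal) : EReal :=
  sSup (f '' A)

variable {K : ℕ}

/-- Pointwise surrogate risk `R(s,p) = ∑ k p_k L(s,k)`. -/
def risk (L : (Fin K → ℝ) → Fin K → ℝ) (s p : Fin K → ℝ) : ℝ :=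
  ∑ k, p k * L s k

/-- Pseudo-risk `R'(s,p) = l(s) + ∑ k p_k (L(s,k) − l(s))` for an adjustment `l`. -/
def pseudoRisk (L : (Fin K → ℝ) → Fin K → ℝ) (l : (Fin K → ℝ) → ℝ)
    (s p : Fin K → ℝ) : ℝ :=
  l s + ∑ k, p k * (L s k - l s)

/-- `M(S,j)`: scores in `S` whose `j`-th coordinate is maximal. -/
def Mset (S : Set (Fin K → ℝ)) (j : Fin K) : Set (Fin K → ℝ) :=
  {s ∈ S | ∀ k, s k ≤ s j}

/-- `max_y p_y − p_j ≥ ε`. -/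
def subOpt (ε : ℝ) (p : Fin K → ℝ) (j : Fin K) : Prop :=
  ∃ y, ε ≤ p y - p j

/-- `T(S,ε,p)`: union of `M(S,j)` over `ε`-suboptimal indices `j`. -/
def Tset (S : Set (Fin K → ℝ)) (ε : ℝ) (p : Fin K → ℝ) : Set (Fin K → ℝ) :=
  {s | ∃ j, subOpt ε p j ∧ s ∈ Mset S j}

/-- `J(ε,p)`: `ε`-suboptimal indices of maximal probability. -/
def Jset (ε : ℝ) (p : Fin K → ℝ) : Set (Fin K) :=
  {j | subOpt ε p j ∧ ∀ i, subOpt ε p i → p i ≤ p j}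

/-- `δ_max(ε,p)`. -/
def deltaMaxP (L : (Fin K → ℝ) → Fin K → ℝ) (S : Set (Fin K → ℝ))
    (ε : ℝ) (p : Fin K → ℝ) : EReal :=
  einf (Tset S ε p) (fun s => risk L s p) - einf S (fun s => risk L s p)

/-- `δ_max(ε)`. -/
def deltaMax (L : (Fin K → ℝ) → Fin K → ℝ) (S : Set (Fin K → ℝ)) (ε : ℝ) : EReal :=
  sInf ((fun p => deltaMaxP L S ε p) '' stdSimplex ℝ (Fin K))

/-- The vector `(a, b) ∈ ℝ²`. -/
def pair (a b : ℝ) : Fin 2 → ℝ := ![a, b]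

/-- `p^ε = ((1+ε)/2, (1−ε)/2)`. -/
def pEps (ε : ℝ) : Fin 2 → ℝ := pair ((1 + ε) / 2) ((1 - ε) / 2)

/-- `δ_binary(ε)` for a binary loss `L₂` with adjustment `l₂`. -/
def deltaBinary (L2 : (Fin 2 → ℝ) → Fin 2 → ℝ) (S2 : Set (Fin 2 → ℝ))
    (l2 : (Fin 2 → ℝ) → ℝ) (ε : ℝ) : EReal :=
  einf S2 (fun u => pseudoRisk L2 l2 u (pEps 0)) -
    einf S2 (fun v => pseudoRisk L2 l2 v (pEps ε))

/-- Condition 1. -/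
def Cond1 (L : (Fin K → ℝ) → Fin K → ℝ) (S : Set (Fin K → ℝ)) : Prop :=
  ∀ ε : ℝ, 0 ≤ ε → ∀ p ∈ stdSimplex ℝ (Fin K), ∀ j0 ∈ Jset 0 p, ∀ je ∈ Jset ε p,
    einf (Tset S ε p) (fun s => risk L s p) =
      einf (Mset S je ∩ Mset S j0) (fun s => risk L s p)

/-- Condition 2 relative to a binary loss `L₂` with adjustment `l₂`. -/
def Cond2 (L : (Fin K → ℝ) → Fin K → ℝ) (S : Set (Fin K → ℝ))
    (L2 : (Fin 2 → ℝ) → Fin 2 → ℝ) (S2 : Set (Fin 2 → ℝ))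
    (l2 : (Fin 2 → ℝ) → ℝ) : Prop :=
  ∀ i j : Fin K, i ≠ j → ∀ p ∈ stdSimplex ℝ (Fin K),
    einfE S2 (fun u => esup S2 (fun v =>
        pseudoRisk L2 l2 u (pair ((p i + p j) / 2) ((p i + p j) / 2)) -
          pseudoRisk L2 l2 v (pair (p i) (p j)))) ≤
      einfE (Mset S i ∩ Mset S j) (fun s =>
        esup {s' ∈ S | ∀ k, k ≠ i → k ≠ j → s' k = s k}
          (fun s' => risk L s p - risk L s' p))

/-- Condition 3 for an (extended-real-valued) function `ζ`. -/
def Cond3 (L2 : (Fin 2 → ℝ) → Fin 2 → ℝ) (S2 : Set (Fin 2 → ℝ))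
    (l2 : (Fin 2 → ℝ) → ℝ) (ζ : ℝ → EReal) : Prop :=
  ∀ ε : ℝ, 0 < ε → ∀ p1 p2 : ℝ, 0 ≤ p2 → p2 ≤ p1 - ε → p1 + p2 ≤ 1 →
    ζ (p1 - p2) ≤
      einf S2 (fun u => pseudoRisk L2 l2 u (pair ((p1 + p2) / 2) ((p1 + p2) / 2))) -
        einf S2 (fun v => pseudoRisk L2 l2 v (pair p1 p2))

/-- Lower-boundedness of the risk. -/
def LowerBoundedRisk (L : (Fin K → ℝ) → Fin K → ℝ) (S : Set (Fin K → ℝ)) : Prop :=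
  ∃ B : ℝ, ∀ s ∈ S, ∀ p ∈ stdSimplex ℝ (Fin K), B ≤ risk L s p

/-- Symmetry of a loss. -/
def Symmetric (L : (Fin K → ℝ) → Fin K → ℝ) (S : Set (Fin K → ℝ)) : Prop :=
  ∀ σ : Equiv.Perm (Fin K), ∀ s ∈ S, (s ∘ σ) ∈ S ∧
    ∀ p ∈ stdSimplex ℝ (Fin K), risk L s p = risk L (s ∘ σ) (p ∘ σ)

/-- The swapping assumption on a score set. -/
def SwapAssump (S : Set (Fin K → ℝ)) : Prop :=
  ∀ i j : Fin K, ∀ s, s ∈ Mset S j → (s ∘ Equiv.swap i j) ∈ Mset S i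

/-- The vector obtained from `s` by replacing coordinates `i` and `j` with their average. -/
def avgVec (s : Fin K → ℝ) (i j : Fin K) : Fin K → ℝ :=
  fun k => if k = i ∨ k = j then (s i + s j) / 2 else s k

/-- The averaging assumption on a score set. -/
def AvgAssump (S : Set (Fin K → ℝ)) : Prop :=
  ∀ i j : Fin K, ∀ s, s ∈ Mset S j → (∀ k, k ≠ j → s k ≤ s i) → s i < s j →
    avgVec s i j ∈ Mset S j ∩ Mset S i

/-- The Lee–Lin–Wahba loss `L(s,y) = ∑_{k ≠ y} φ(s_k)`. -/
def LLW (φ : ℝ → ℝ) (s : Fin K → ℝ) (y : Fin K) : ℝ :=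
  ∑ k ∈ ({y}ᶜ : Finset (Fin K)), φ (s k)

/-- The sum-to-zero score set. -/
def sumZero (K : ℕ) : Set (Fin K → ℝ) := {s | ∑ k, s k = 0}

/-- The background-discrimination loss of Zhang. -/
def BD (ψ φ F : ℝ → ℝ) (s : Fin K → ℝ) (y : Fin K) : ℝ :=
  ψ (s y) + F (∑ k, φ (s k))


/-- Condition ZhangInf (binary, for `ψ`). -/
def CondZhangInf (ψ : ℝ → ℝ) (L2 : (Fin 2 → ℝ) → Fin 2 → ℝ)
    (S2 : Set (Fin 2 → ℝ)) (l2 : (Fin 2 → ℝ) → ℝ) : Prop :=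
  ∀ p1 p2 : ℝ, 0 ≤ p1 → 0 ≤ p2 →
    esupE S2 (fun v => einf S2 (fun u =>
        pseudoRisk L2 l2 u (pair ((p1 + p2) / 2) ((p1 + p2) / 2)) -
          pseudoRisk L2 l2 v (pair p1 p2))) =
      esupE S2 (fun v =>
        einf {u ∈ S2 | u 0 = u 1 ∧ ψ (u 0) + ψ (u 1) ≤ ψ (v 0) + ψ (v 1)}
          (fun u =>
            pseudoRisk L2 l2 u (pair ((p1 + p2) / 2) ((p1 + p2) / 2)) -
              pseudoRisk L2 l2 v (pair p1 p2)))


/-- The coupled logistic-regression loss `L_log(s,y) = −s_y + ln(∑ k e^{s_k})`. -/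
def Llog (s : Fin K → ℝ) (y : Fin K) : ℝ :=
  -s y + Real.log (∑ k, Real.exp (s k))

/-- The adjustment `l(s) = ln(∑ k e^{s_k})` of the coupled logistic-regression loss. -/
def logAdj (s : Fin K → ℝ) : ℝ := Real.log (∑ k, Real.exp (s k))

/-- `−ln t` as an extended real, equal to `+∞` for `t ≤ 0`. -/
def negLog (t : ℝ) : EReal := if t ≤ 0 then ⊤ else ((-Real.log t : ℝ) : EReal)

/-- The pointwise surrogate risk of the decoupled logistic-regression loss
`L_LR(s,y) = −ln s_y`, namely `−∑ k p_k ln s_k` (with value `+∞` whenever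
`p_k > 0` and `s_k = 0` for some `k`). -/
def riskLR (s p : Fin K → ℝ) : EReal := ∑ k, (p k : EReal) * negLog (s k)

/-- `δ_max(ε,p)` for an extended-real-valued pointwise surrogate risk. -/
def deltaMaxPE (R : (Fin K → ℝ) → (Fin K → ℝ) → EReal) (S : Set (Fin K → ℝ))
    (ε : ℝ) (p : Fin K → ℝ) : EReal :=
  einfE (Tset S ε p) (fun s => R s p) - einfE S (fun s => R s p)

/-- `δ_max(ε)` for an extended-real-valued pointwise surrogate risk. -/
def deltaMaxE (R : (Fin K → ℝ) → (Fin K → ℝ) → EReal) (S : Set (Fin K → ℝ))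
    (ε : ℝ) : EReal :=
  sInf ((fun p => deltaMaxPE R S ε p) '' stdSimplex ℝ (Fin K))

/-- `δ_binary(ε)` for the binary decoupled logistic-regression loss on `Δ₂`. -/
def deltaBinaryLR (ε : ℝ) : EReal :=
  einfE (stdSimplex ℝ (Fin 2)) (fun u => riskLR u (pEps 0)) -
    einfE (stdSimplex ℝ (Fin 2)) (fun v => riskLR v (pEps ε))

end Calib

namespace Calib

lemma einf_le {α : Type*} {A : Set α} {f : α → ℝ} {a : α} (ha : a ∈ A) :
    einf A f ≤ (f a : EReal) :=
  sInf_le ⟨a, ha, rfl⟩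

lemma le_einf {α : Type*} {A : Set α} {f : α → ℝ} {x : EReal}
    (h : ∀ a ∈ A, x ≤ (f a : EReal)) : x ≤ einf A f := by
  refine le_sInf ?_
  rintro _ ⟨a, ha, rfl⟩
  exact h a ha

lemma esupE_einf_sub_le {α : Type*} (A : Set α) (f g : α → ℝ) :
    esupE A (fun v => einf A (fun u => f u - g v)) ≤ einf A f - einf A g := by
  refine sSup_le ?_
  rintro _ ⟨v, hv, rfl⟩
  refine le_trans ?_ (EReal.sub_le_sub le_rfl (einf_le hv))
  rw [EReal.le_sub_iff_add_le (.inl (EReal.coe_ne_bot _)) (.inl (EReal.coe_ne_top _))]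
  refine le_einf fun u hu => ?_
  refine EReal.add_le_of_le_sub ?_
  simpa using einf_le (f := fun u => f u - g v) hu

/-- To bound `inf f - inf g` it suffices to bound `inf f - g v` for each `v`. No lower bound on `f`
is needed: if `inf f = ⊥` the difference is `⊥`, whatever `inf g` is. -/
lemma einf_sub_einf_le {α : Type*} {A : Set α} {f g : α → ℝ} {M : EReal}
    (hM : ∀ v ∈ A, einf A f - (g v : EReal) ≤ M) :
    einf A f - einf A g ≤ M := by
  rcases A.eq_empty_or_nonempty with rfl | ⟨w, hw⟩
  -- over the empty set both infima are `⊤`, and `⊤ - ⊤ = ⊥`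
  · simp [einf]
  have htop := einf_le (f := f) hw
  generalize einf A f = a at *
  rcases eq_or_ne a ⊥ with rfl | ha
  · simp
  lift a to ℝ using ⟨(lt_of_le_of_lt htop (EReal.coe_lt_top _)).ne, ha⟩
  induction M with
  | top => exact le_top
  | bot =>
    have h := hM w hw
    rw [← EReal.coe_sub] at h
    exact absurd (le_bot_iff.1 h) (EReal.coe_ne_bot _)
  | coe m =>
    have h : ((a - m : ℝ) : EReal) ≤ einf A g := le_einf fun v hv => by
      have h := hM v hv
      norm_cast at h ⊢
      linarith
    refine EReal.sub_le_of_le_add' ?_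
    refine le_trans (le_of_eq ?_) (add_le_add_left h _)
    norm_cast
    ring

lemma pseudoRisk_BD (ψ φ F : ℝ → ℝ) (u : Fin 2 → ℝ) (a b : ℝ) :
    pseudoRisk (BD ψ φ F) (fun u => F (φ (u 0) + φ (u 1))) u (pair a b) =
      F (φ (u 0) + φ (u 1)) + (a * ψ (u 0) + b * ψ (u 1)) := by
  simp [pseudoRisk, BD, pair, Fin.sum_univ_two]

end Calib

theorem lemma_ZhangCondInfWithP (ψ φ F : ℝ → ℝ) (S2 : Set (Fin 2 → ℝ))
    (hswap : Calib.SwapAssump S2)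
    (hconv : ∀ y : Fin 2, ConvexOn ℝ (Set.univ : Set (Fin 2 → ℝ)) (fun u => Calib.BD ψ φ F u y))
    (hψ : Antitone ψ)
    (hlb : Calib.LowerBoundedRisk (Calib.BD ψ φ F) S2)
    (hZ : Calib.CondZhangInf ψ (Calib.BD ψ φ F) S2
      (fun u => F (φ (u 0) + φ (u 1)))) :
    ∀ ε : ℝ, 0 < ε → ε ≤ 1 → ∀ p1 p2 : ℝ, 0 ≤ p2 → p2 ≤ p1 - ε → p1 + p2 ≤ 1 →
      Calib.deltaBinary (Calib.BD ψ φ F) S2 (fun u => F (φ (u 0) + φ (u 1)))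
          (p1 - p2) ≤
        Calib.einf S2 (fun u =>
            Calib.pseudoRisk (Calib.BD ψ φ F) (fun u => F (φ (u 0) + φ (u 1))) u
              (Calib.pair ((p1 + p2) / 2) ((p1 + p2) / 2))) -
          Calib.einf S2 (fun v =>
            Calib.pseudoRisk (Calib.BD ψ φ F) (fun u => F (φ (u 0) + φ (u 1))) v
              (Calib.pair p1 p2)) := by
  intro ε _ _ p1 p2 hp2 hp hp1
  refine le_trans ?_ (Calib.esupE_einf_sub_le S2 _ _)
  rw [hZ p1 p2 (by linarith) hp2]
  refine Calib.einf_sub_einf_le fun v hv => ?_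
  refine le_trans ?_ (le_sSup ⟨v, hv, rfl⟩)
  refine Calib.le_einf ?_
  rintro u ⟨hu, -, hle⟩
  refine (EReal.sub_le_sub (Calib.einf_le hu) le_rfl).trans ?_
  norm_cast
  simp only [Calib.pEps, Calib.pseudoRisk_BD]
  nlinarith [mul_nonneg (sub_nonneg.2 hp1) (sub_nonneg.2 hle)]
end
end

section
/- Let K ≥ 2 and let L_LR be the decoupled logistic-regression loss on Δ_K. Then for all ε ∈ (0,1]: δ_max(ε) ≥ δ_binary(ε), where δ_binary(ε) := inf_{u ∈ Δ₂} R_LR(u, p^0) − inf_{v ∈ Δ₂} R_LR(v, p^ε) for the binary decoupled logistic-regression loss, and this δ_binary satisfies δ_binary(ε) = ½((1+ε)ln(1+ε) + (1−ε)ln(1−ε)) (with the convention 0·ln 0 = 0 at ε = 1). Moreover δ_max(ε) = δ_binary(ε) when K = 2. -/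
/-!
Write `H(p) = -∑ p_k ln p_k` and `D(ε) = ((1+ε) ln (1+ε) + (1-ε) ln (1-ε)) / 2`. By Gibbs'
inequality `inf_s R(s,p) = H(p)`, attained at `s = p`; for `K = 2` this gives
`δ_binary(ε) = ln 2 - H(p^ε) = D(ε)`.

For the lower bound, let `s_j` be maximal and `p_i - p_j ≥ ε`, and put `m = (s_i + s_j)/2`. Apply
Gibbs' inequality to `p` and the distribution `r` which agrees with `s` off `{i, j}` and has
`r_i = (1+ε) m`, `r_j = (1-ε) m`. As `p_i ≥ p_j` and `s_i ≤ s_j`, concavity of `ln` gives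
`p_i ln s_i + p_j ln s_j ≤ (p_i + p_j) ln m`, and `p_i - p_j ≥ ε`, `p_i + p_j ≤ 1` give
`p_i ln (1+ε) + p_j ln (1-ε) ≥ D(ε)`. Together, `R(s,p) ≥ H(p) + D(ε)`
(`excess_risk_lower_bound`). For `K = 2` the score `(1/2, 1/2)` attains the bound at `p^ε`.
-/

open scoped BigOperators

noncomputable section

namespace Calib

/-- Gibbs' inequality, for nonnegative vectors of equal mass; only the support of `p` has to lie
in that of `r`. -/
lemma gibbs {K : ℕ} (p r : Fin K → ℝ) (hp : ∀ k, 0 ≤ p k) (hr : ∀ k, 0 ≤ r k)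
    (hsum : ∑ k, p k = ∑ k, r k) (hpr : ∀ k, 0 < p k → 0 < r k) :
    ∑ k, p k * Real.log (r k) ≤ ∑ k, p k * Real.log (p k) := by
  have key : ∀ k, p k * Real.log (r k) - p k * Real.log (p k) ≤ r k - p k := by
    intro k
    rcases (hp k).eq_or_lt with h | h
    · simp [← h, hr k]
    · have h2 := hpr k h
      have h3 := Real.log_le_sub_one_of_pos (div_pos h2 h)
      rw [Real.log_div h2.ne' h.ne'] at h3
      have h4 := mul_le_mul_of_nonneg_left h3 h.le
      have h5 : p k * (r k / p k - 1) = r k - p k := by field_simp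
      linarith
  have := Finset.sum_le_sum (fun k (_ : k ∈ Finset.univ) => key k)
  simp only [Finset.sum_sub_distrib] at this
  linarith

/-- The Shannon entropy `H(p) = -∑ p_k ln p_k`. -/
def entropy {K : ℕ} (p : Fin K → ℝ) : ℝ := -∑ k, p k * Real.log (p k)

lemma riskLR_eq {K : ℕ} (s p : Fin K → ℝ) (hp : ∀ k, 0 ≤ p k)
    (h : ∀ k, 0 < p k → 0 < s k) :
    riskLR s p = ((-∑ k, p k * Real.log (s k) : ℝ) : EReal) := by
  have hterm : ∀ k, (p k : EReal) * negLog (s k) =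
      ((-(p k * Real.log (s k)) : ℝ) : EReal) := by
    intro k
    rcases (hp k).eq_or_lt with h0 | h0
    · simp [← h0]
    · rw [negLog, if_neg (not_le.2 (h k h0)), ← EReal.coe_mul, mul_neg]
  rw [riskLR, ← Finset.sum_neg_distrib]
  simp only [hterm]
  -- coercion commutes with finite sums
  induction (Finset.univ : Finset (Fin K)) using Finset.induction_on with
  | empty => simp
  | insert a t ha ih => rw [Finset.sum_insert ha, Finset.sum_insert ha, ih, EReal.coe_add]

lemma riskLR_eq_top {K : ℕ} {s p : Fin K → ℝ} (hs : s ∈ stdSimplex ℝ (Fin K))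
    (hp : ∀ k, 0 ≤ p k) {k : Fin K} (hk : 0 < p k) (hsk : s k ≤ 0) :
    riskLR s p = ⊤ := by
  have hnn : ∀ l ∈ Finset.univ, (0 : EReal) ≤ (p l : EReal) * negLog (s l) := by
    intro l _
    refine mul_nonneg (by exact_mod_cast hp l) ?_
    unfold negLog
    split_ifs with h
    · exact le_top
    · have hs1 : s l ≤ 1 := (mem_Icc_of_mem_stdSimplex hs l).2
      have := Real.log_nonpos (hs.1 l) hs1
      exact_mod_cast (by linarith : (0 : ℝ) ≤ -Real.log (s l))
  have := Finset.single_le_sum hnn (Finset.mem_univ k)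
  rw [negLog, if_pos hsk, EReal.coe_mul_top_of_pos hk] at this
  exact top_le_iff.1 this

/-- A lower bound for the risk need only be checked on scores that charge the support of `p`. -/
lemma le_riskLR {K : ℕ} {s p : Fin K → ℝ} (hs : s ∈ stdSimplex ℝ (Fin K))
    (hp : ∀ k, 0 ≤ p k) (c : ℝ)
    (h : (∀ k, 0 < p k → 0 < s k) → c ≤ -∑ k, p k * Real.log (s k)) :
    (c : EReal) ≤ riskLR s p := by
  by_cases hpos : ∀ k, 0 < p k → 0 < s k
  · rw [riskLR_eq s p hp hpos]
    exact_mod_cast h hpos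
  · push Not at hpos
    obtain ⟨k, hk, hsk⟩ := hpos
    rw [riskLR_eq_top hs hp hk hsk]
    exact le_top

lemma einfE_riskLR {K : ℕ} {p : Fin K → ℝ} (hp : p ∈ stdSimplex ℝ (Fin K)) :
    einfE (stdSimplex ℝ (Fin K)) (fun s => riskLR s p) = (entropy p : EReal) := by
  apply le_antisymm
  · refine (sInf_le (Set.mem_image_of_mem _ hp)).trans_eq ?_
    exact riskLR_eq p p hp.1 (fun _ h => h)
  · refine le_sInf ?_
    rintro _ ⟨s, hs, rfl⟩
    refine le_riskLR hs hp.1 _ fun hpos => ?_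
    have := gibbs p s hp.1 hs.1 (hp.2.trans hs.2.symm) hpos
    unfold entropy
    linarith

/-- The closed form `((1+ε) ln (1+ε) + (1-ε) ln (1-ε)) / 2` of `δ_binary(ε)`. At `ε = 1` the
convention `0 · ln 0 = 0` is automatic. -/
def D (ε : ℝ) : ℝ := ((1 + ε) * Real.log (1 + ε) + (1 - ε) * Real.log (1 - ε)) / 2

/-- The right side is affine in `(a - b, a + b)`, with nonnegative and nonpositive slope
respectively, so it is smallest at `a - b = ε`, `a + b = 1`. -/
lemma D_le {ε a b : ℝ} (hε : 0 < ε) (hε1 : ε ≤ 1) (hb : 0 ≤ b) (hab : ε ≤ a - b)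
    (hab1 : a + b ≤ 1) : D ε ≤ a * Real.log (1 + ε) + b * Real.log (1 - ε) := by
  unfold D
  have h1 : 0 ≤ Real.log (1 + ε) := Real.log_nonneg (by linarith)
  rcases hε1.eq_or_lt with rfl | hlt
  · have hb0 : b = 0 := by linarith
    have ha : a = 1 := by linarith
    subst hb0 ha
    norm_num
  · have h2 : Real.log (1 - ε) ≤ 0 := Real.log_nonpos (by linarith) (by linarith)
    have h3 : Real.log (1 + ε) + Real.log (1 - ε) ≤ 0 := by
      rw [← Real.log_mul (by linarith) (by linarith)]
      exact Real.log_nonpos (by nlinarith) (by nlinarith)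
    nlinarith [mul_nonneg (sub_nonneg.2 hab) (by linarith : 0 ≤ Real.log (1 + ε) - Real.log (1 - ε)),
      mul_nonneg (sub_nonneg.2 hab1) (neg_nonneg.2 h3)]

/-- Rearrangement followed by concavity of the logarithm. -/
lemma weighted_log_le {a b x y : ℝ} (hb : 0 ≤ b) (hba : b ≤ a) (hx : 0 < x) (hxy : x ≤ y) :
    a * Real.log x + b * Real.log y ≤ (a + b) * Real.log ((x + y) / 2) := by
  have hy : 0 < y := hx.trans_le hxy
  have hlog : Real.log x ≤ Real.log y := Real.log_le_log hx hxy
  have hm : Real.log x + Real.log y ≤ 2 * Real.log ((x + y) / 2) := by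
    rw [← Real.log_mul hx.ne' hy.ne', show (2 : ℝ) * Real.log ((x + y) / 2) =
      Real.log (((x + y) / 2) ^ 2) by rw [Real.log_pow]; norm_num]
    exact Real.log_le_log (by positivity) (by nlinarith [sq_nonneg (x - y)])
  nlinarith [mul_nonneg (sub_nonneg.2 hba) (sub_nonneg.2 hlog),
    mul_nonneg (by linarith : 0 ≤ a + b) (sub_nonneg.2 hm)]

lemma sum_split {K : ℕ} {i j : Fin K} (hij : i ≠ j) (f : Fin K → ℝ) :
    ∑ k, f k = f i + (f j + ∑ k ∈ (Finset.univ.erase i).erase j, f k) := by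
  rw [Finset.add_sum_erase _ _ (by simp [hij.symm]), Finset.add_sum_erase _ _ (by simp)]

lemma excess_risk_lower_bound {K : ℕ} {ε : ℝ} (hε : 0 < ε) (hε1 : ε ≤ 1) {p s : Fin K → ℝ}
    (hp : p ∈ stdSimplex ℝ (Fin K)) (hs : s ∈ stdSimplex ℝ (Fin K)) {i j : Fin K}
    (hij : ε ≤ p i - p j) (hmax : s i ≤ s j) (hpos : ∀ k, 0 < p k → 0 < s k) :
    D ε + entropy p ≤ -∑ k, p k * Real.log (s k) := by
  have hne : i ≠ j := by
    rintro rfl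
    linarith
  have hpj := hp.1 j
  have hsi : 0 < s i := hpos i (by linarith)
  set m := (s i + s j) / 2 with hm
  have hm0 : 0 < m := by linarith
  let r : Fin K → ℝ := fun k => if k = i then (1 + ε) * m else if k = j then (1 - ε) * m else s k
  have hri : r i = (1 + ε) * m := by simp [r]
  have hrj : r j = (1 - ε) * m := by simp [r, hne.symm]
  have hro : ∀ k ∈ (Finset.univ.erase i).erase j, r k = s k := by
    intro k hk
    simp only [Finset.mem_erase, Finset.mem_univ, and_true] at hk
    simp [r, hk.1, hk.2]
  have hP : p i + p j ≤ 1 := by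
    have h1 := sum_split hne p
    have h2 : 0 ≤ ∑ k ∈ (Finset.univ.erase i).erase j, p k :=
      Finset.sum_nonneg fun k _ => hp.1 k
    linarith [hp.2]
  have hr0 : ∀ k, 0 ≤ r k := by
    intro k
    simp only [r]
    split_ifs
    · positivity
    · exact mul_nonneg (by linarith) hm0.le
    · exact hs.1 k
  have hrsum : ∑ k, r k = 1 := by
    have h1 := sum_split hne s
    rw [sum_split hne r, Finset.sum_congr rfl hro, hri, hrj]
    linarith [hs.2]
  -- if `p j > 0` then `ε ≤ p i - p j` forces `ε < 1`
  have hpr : ∀ k, 0 < p k → 0 < r k := by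
    intro k hk
    by_cases hki : k = i
    · subst hki
      rw [hri]
      positivity
    by_cases hkj : k = j
    · subst hkj
      rw [hrj]
      exact mul_pos (by linarith) hm0
    · rw [hro k (by simp [hki, hkj])]
      exact hpos k hk
  have hG := gibbs p r hp.1 hr0 (hp.2.trans hrsum.symm) hpr
  rw [sum_split hne (fun k => p k * Real.log (r k)),
    Finset.sum_congr rfl (fun k hk => by rw [hro k hk]), hri, hrj,
    Real.log_mul (by linarith) hm0.ne'] at hG
  have hj : p j * Real.log ((1 - ε) * m) = p j * (Real.log (1 - ε) + Real.log m) := by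
    rcases hpj.eq_or_lt with h | h
    · simp [← h]
    · rw [Real.log_mul (by linarith) hm0.ne']
  rw [hj] at hG
  have hD := D_le hε hε1 hpj hij hP
  have hW := weighted_log_le hpj (by linarith : p j ≤ p i) hsi hmax
  rw [← hm] at hW
  rw [sum_split hne (fun k => p k * Real.log (s k)), entropy]
  linarith

lemma pEps_mem {ε : ℝ} (h0 : 0 ≤ ε) (h1 : ε ≤ 1) : pEps ε ∈ stdSimplex ℝ (Fin 2) := by
  refine ⟨fun k => ?_, ?_⟩
  · fin_cases k <;> simp [pEps, pair] <;> linarith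
  · simp [pEps, pair, Fin.sum_univ_two]
    ring

lemma entropy_pEps {ε : ℝ} (h0 : 0 ≤ ε) (h1 : ε ≤ 1) :
    entropy (pEps ε) = Real.log 2 - D ε := by
  have ha : Real.log ((1 + ε) / 2) = Real.log (1 + ε) - Real.log 2 :=
    Real.log_div (by linarith) (by norm_num)
  have hb : (1 - ε) / 2 * Real.log ((1 - ε) / 2) =
      (1 - ε) / 2 * (Real.log (1 - ε) - Real.log 2) := by
    rcases h1.eq_or_lt with rfl | h
    · simp
    · rw [Real.log_div (by linarith) (by norm_num)]
  simp only [entropy, pEps, pair, Fin.sum_univ_two, Matrix.cons_val_zero, Matrix.cons_val_one, D]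
  rw [ha, hb]
  ring

lemma deltaBinaryLR_eq {ε : ℝ} (h0 : 0 ≤ ε) (h1 : ε ≤ 1) :
    deltaBinaryLR ε = (D ε : EReal) := by
  rw [deltaBinaryLR, einfE_riskLR (pEps_mem le_rfl zero_le_one), einfE_riskLR (pEps_mem h0 h1),
    entropy_pEps le_rfl zero_le_one, entropy_pEps h0 h1, ← EReal.coe_sub]
  congr 1
  simp [D]

lemma le_deltaMaxE {K : ℕ} {ε : ℝ} (hε : 0 < ε) (hε1 : ε ≤ 1) :
    (D ε : EReal) ≤ deltaMaxE (fun s p => riskLR s p) (stdSimplex ℝ (Fin K)) ε := by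
  refine le_sInf ?_
  rintro _ ⟨p, hp, rfl⟩
  simp only [deltaMaxPE]
  rw [einfE_riskLR hp]
  have h : ((D ε + entropy p : ℝ) : EReal) ≤
      einfE (Tset (stdSimplex ℝ (Fin K)) ε p) (fun s => riskLR s p) := by
    refine le_sInf ?_
    rintro _ ⟨s, ⟨j, ⟨i, hij⟩, hs, hmax⟩, rfl⟩
    exact le_riskLR hs hp.1 _ (excess_risk_lower_bound hε hε1 hp hs hij (hmax i))
  refine le_trans (le_of_eq ?_) (EReal.sub_le_sub h le_rfl)
  rw [← EReal.coe_sub, add_sub_cancel_right]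

lemma deltaMaxE_two_le {ε : ℝ} (hε : 0 < ε) (hε1 : ε ≤ 1) :
    deltaMaxE (fun s p => riskLR s p) (stdSimplex ℝ (Fin 2)) ε ≤ (D ε : EReal) := by
  have hp := pEps_mem hε.le hε1
  refine (sInf_le (Set.mem_image_of_mem _ hp)).trans ?_
  simp only [deltaMaxPE]
  rw [einfE_riskLR hp, entropy_pEps hε.le hε1]
  -- `pEps 0 = (1/2, 1/2)` is the competing score
  have h : einfE (Tset (stdSimplex ℝ (Fin 2)) ε (pEps ε)) (fun s => riskLR s (pEps ε)) ≤
      ((Real.log 2 : ℝ) : EReal) := by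
    have hT : pEps 0 ∈ Tset (stdSimplex ℝ (Fin 2)) ε (pEps ε) := by
      refine ⟨1, ⟨0, ?_⟩, pEps_mem le_rfl zero_le_one, fun k => ?_⟩
      · simp only [pEps, pair, Matrix.cons_val_zero, Matrix.cons_val_one]
        linarith
      · fin_cases k <;> simp [pEps, pair]
    refine (sInf_le (Set.mem_image_of_mem _ hT)).trans_eq ?_
    refine (riskLR_eq _ _ hp.1 fun k _ => ?_).trans ?_
    · fin_cases k <;> simp [pEps, pair]
    · congr 1
      simp [pEps, pair, Fin.sum_univ_two]
      ring
  refine (EReal.sub_le_sub h le_rfl).trans_eq ?_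
  rw [← EReal.coe_sub, sub_sub_cancel]

end Calib

theorem thm_logistic {K : ℕ} (hK : 2 ≤ K) :
    ∀ ε : ℝ, 0 < ε → ε ≤ 1 →
      (Calib.deltaBinaryLR ε ≤
        Calib.deltaMaxE (fun s p => Calib.riskLR s p) (stdSimplex ℝ (Fin K)) ε) ∧
      Calib.deltaBinaryLR ε =
        ((((1 + ε) * Real.log (1 + ε) + (1 - ε) * Real.log (1 - ε)) / 2 : ℝ) :
          EReal) ∧
      (K = 2 →
        Calib.deltaMaxE (fun s p => Calib.riskLR s p) (stdSimplex ℝ (Fin K)) ε =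
          Calib.deltaBinaryLR ε) := by
  intro ε hε hε1
  have hB := Calib.deltaBinaryLR_eq hε.le hε1
  refine ⟨hB ▸ Calib.le_deltaMaxE hε hε1, hB, ?_⟩
  rintro rfl
  rw [hB]
  exact le_antisymm (Calib.deltaMaxE_two_le hε hε1) (Calib.le_deltaMaxE hε hε1)
end
end
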